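/- arXiv:1406.4566 — 2 statements merged into one kernel-verified Lean document; each statement's English description precedes it below -/
import Mathlib

section
/- Let $T = (V, E)$ be a finite tree with a distance $d$ additive along paths and positive on edges. Let $X \subseteq V$ be a subset of nodes (the observed nodes) such that every node of $V \setminus X$ has degree at least 3. Define the surrogate of $h \in V$ as $\mathrm{Sg}(h) = \arg\min_{v \in X} d(h, v)$ (assume uniqueness). Then for every $v_j \in X$ and every $h \in \mathrm{Sg}^{-1}(v_j)$, every node on the path in $T$ from $v_j$ to $h$ also has surrogate $v_j$. -/
/-- `c` lies on the (unique) path from `a` to `b` in `G`. -/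
def SimpleGraph.OnPath {V : Type*} (G : SimpleGraph V) (a b c : V) : Prop :=
  ∀ p : G.Walk a b, p.IsPath → c ∈ p.support

theorem onPath_of_mem {V : Type*} {G : SimpleGraph V} (hT : G.IsTree) {a b c : V}
    (p : G.Walk a b) (hp : p.IsPath) (hc : c ∈ p.support) : G.OnPath a b c := by
  intro q hq
  have h : (⟨q, hq⟩ : G.Path a b) = ⟨p, hp⟩ := hT.isAcyclic.path_unique _ _
  have h' : q = p := congrArg Subtype.val h
  rw [h']
  exact hc

theorem edge_triangle {V : Type*} {G : SimpleGraph V} (hT : G.IsTree) (d : V → V → ℝ)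
    (hadd : ∀ a b c : V, G.OnPath a b c → d a b = d a c + d c b)
    (hpos : ∀ u v : V, G.Adj u v → 0 < d u v) {u v : V} (b : V) (huv : G.Adj u v) :
    d u b ≤ d u v + d v b := by
  obtain ⟨p, hp⟩ := (hT.connected v b).exists_isPath
  by_cases hu : u ∈ p.support
  · have h1 := hadd v b u (onPath_of_mem hT p hp hu)
    have h2 := hpos u v huv
    have h3 := hpos v u huv.symm
    linarith
  · have hq : (SimpleGraph.Walk.cons huv p).IsPath := hp.cons hu
    exact (hadd u b v (onPath_of_mem hT _ hq (by simp))).le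

theorem tree_triangle {V : Type*} {G : SimpleGraph V} (hT : G.IsTree) (d : V → V → ℝ)
    (hadd : ∀ a b c : V, G.OnPath a b c → d a b = d a c + d c b)
    (hpos : ∀ u v : V, G.Adj u v → 0 < d u v) (b : V) {a c : V} (p : G.Walk a c)
    (hp : p.IsPath) : d a b ≤ d a c + d c b := by
  induction p with
  | nil =>
    rename_i u
    have := hadd u u u (fun q _ => q.start_mem_support)
    linarith
  | cons huv q ih =>
    rename_i u v w
    have h1 := hadd u w v (onPath_of_mem hT _ hp (by simp))
    have h2 := ih hp.of_cons
    have h3 := edge_triangle hT d hadd hpos b huv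
    linarith

/-- Surrogate consistency along paths: in a finite tree with a path-additive
distance positive on edges, with observed node set `X` such that every hidden
node (node outside `X`) has degree at least 3, if the surrogate map `Sg`
assigns to every node its unique closest observed node, then for every
`vⱼ ∈ X` and every node `h` with `Sg h = vⱼ`, every node on the path from
`vⱼ` to `h` also has surrogate `vⱼ`. -/
theorem surrogate_consistency_along_path
    {V : Type*} [Fintype V] (G : SimpleGraph V) [DecidableRel G.Adj]
    (hT : G.IsTree) (d : V → V → ℝ)
    (hadd : ∀ a b c : V, G.OnPath a b c → d a b = d a c + d c b)
    (hpos : ∀ u v : V, G.Adj u v → 0 < d u v)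
    (X : Set V)
    (hdeg : ∀ v : V, v ∉ X → 3 ≤ G.degree v)
    (Sg : V → V)
    (hSgX : ∀ v : V, Sg v ∈ X)
    (hSgmin : ∀ (v : V) (x : V), x ∈ X → x ≠ Sg v → d v (Sg v) < d v x) :
    ∀ vj : V, vj ∈ X → ∀ h : V, Sg h = vj →
      ∀ c : V, G.OnPath vj h c → Sg c = vj := by
  intro vj hvj h hh c hc
  by_contra hne
  have hc' : G.OnPath h vj c := by
    intro p hp
    have := hc p.reverse hp.reverse
    simpa using this
  have h1 := hadd h vj c hc'
  have h2 := hSgmin c vj hvj (Ne.symm hne)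
  have h3 := hSgmin h (Sg c) (hSgX c) (by rw [hh]; exact hne)
  rw [hh] at h3
  obtain ⟨p, hp⟩ := (hT.connected h c).exists_isPath
  have h4 := tree_triangle hT d hadd hpos (Sg c) p hp
  linarith
end

section
/- Let $T = (V, E)$ be a finite tree and let $a, b \in V$ be distinct. Let $P_1$ and $P_2$ be the vertex sequence of the (unique) path from $a$ to $b$ in $T$. If $T'$ is another tree on a vertex set $V'$ with $a, b \in V'$, and $T$ and $T'$ agree on $V \cap V'$ outside of the interiors of their $a$-$b$ paths, then the tree obtained by replacing the $a$-$b$ path of $T$ with the concatenation $[a, h_1^i, \ldots, h_2^i, h_1^j, \ldots, h_2^j, b]$ (keeping $h_1^i$ adjacent to $a$ from $T$'s path and $h_2^j$ adjacent to $b$ from $T'$'s path) is again a tree. -/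
open SimpleGraph in
lemma su_reach_snd {V : Type*} {G : SimpleGraph V} {a b : V} (p : G.Walk a b) (hp : p.IsPath)
    (hl : 2 ≤ p.length) : (G.deleteEdges {s(a, p.getVert 1)}).Reachable (p.getVert 1) b := by
  cases p with
  | nil => simp at hl
  | @cons _ c _ h q =>
    rw [Walk.cons_isPath_iff] at hp
    simp only [Walk.getVert_cons_succ, Walk.getVert_zero]
    refine ⟨q.toDeleteEdge s(a, c) ?_⟩
    intro hm
    exact hp.2 (Walk.fst_mem_support_of_mem_edges q hm)

open SimpleGraph in
lemma su_reach_of_edges {V : Type*} {G M : SimpleGraph V}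
    (h : ∀ u v, G.Adj u v → M.Reachable u v) {u v : V} (p : G.Walk u v) : M.Reachable u v := by
  induction p with
  | nil => rfl
  | cons e q ih => exact (h _ _ e).trans ih

open SimpleGraph in
lemma su_reach_induce {V : Type*} {M : SimpleGraph V} {S : Set V}
    (h : ∀ u v, M.Adj u v → u ∈ S ∧ v ∈ S) {u v : V} (p : M.Walk u v) (hu : u ∈ S) (hv : v ∈ S) :
    (M.induce S).Reachable ⟨u, hu⟩ ⟨v, hv⟩ := by
  induction p with
  | nil => rfl
  | cons e q ih =>
    have : (M.induce S).Adj ⟨_, hu⟩ ⟨_, (h _ _ e).2⟩ := e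
    exact this.reachable.trans (ih (h _ _ e).2 hv)

open SimpleGraph in
lemma su_card_induce {V : Type*} {M : SimpleGraph V} {S : Set V}
    (h : ∀ u v, M.Adj u v → u ∈ S ∧ v ∈ S) :
    Nat.card (M.induce S).edgeSet = M.edgeSet.ncard := by
  have hinj : Function.Injective (Sym2.map (Subtype.val : S → V)) :=
    Sym2.map.injective Subtype.val_injective
  rw [Nat.card_coe_set_eq, ← Set.ncard_image_of_injective _ hinj]
  congr 1
  ext e
  induction e with
  | _ x y =>
  constructor
  · rintro ⟨e', he', hee⟩
    rw [← hee]
    induction e' with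
    | _ z w => exact he'
  · intro hxy
    exact ⟨s(⟨x, (h _ _ hxy).1⟩, ⟨y, (h _ _ hxy).2⟩), hxy, rfl⟩


/-- Correctness of the structure-union (path-merging) step.  Two local latent
trees `G₁` (on vertex set `S₁`) and `G₂` (on vertex set `S₂`) share exactly
the two group leaders `a` and `b` (so they agree on `S₁ ∩ S₂` outside the
interiors of their `a`-`b` paths, which are disjoint).  Let
`h₂ⁱ = p₁.getVert (p₁.length - 1)` be the hidden neighbor of `b` on `G₁`'s
`a`-`b` path, and `h₁ʲ = p₂.getVert 1` the hidden neighbor of `a` on `G₂`'s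
`a`-`b` path.  Replacing the two conflicting paths by the concatenation
`[a, h₁ⁱ, …, h₂ⁱ, h₁ʲ, …, h₂ʲ, b]` — i.e. deleting the edge `(h₂ⁱ, b)` from
`G₁`, deleting the edge `(a, h₁ʲ)` from `G₂`, and adding the edge
`(h₂ⁱ, h₁ʲ)` — yields again a tree on `S₁ ∪ S₂`. -/
theorem structure_union_is_tree
    {V : Type*} [Fintype V] (G₁ G₂ : SimpleGraph V)
    (S₁ S₂ : Set V) (a b : V) (hab : a ≠ b)
    (hS : S₁ ∩ S₂ = {a, b})
    (hG₁S : ∀ u v : V, G₁.Adj u v → u ∈ S₁ ∧ v ∈ S₁)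
    (hG₂S : ∀ u v : V, G₂.Adj u v → u ∈ S₂ ∧ v ∈ S₂)
    (hT₁ : (G₁.induce S₁).IsTree) (hT₂ : (G₂.induce S₂).IsTree)
    (p₁ : G₁.Walk a b) (hp₁ : p₁.IsPath) (hlen₁ : 2 ≤ p₁.length)
    (p₂ : G₂.Walk a b) (hp₂ : p₂.IsPath) (hlen₂ : 2 ≤ p₂.length) :
    (((G₁.deleteEdges {s(p₁.getVert (p₁.length - 1), b)} ⊔
        G₂.deleteEdges {s(a, p₂.getVert 1)}) ⊔
        SimpleGraph.fromEdgeSet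
          {s(p₁.getVert (p₁.length - 1), p₂.getVert 1)}).induce
      (S₁ ∪ S₂)).IsTree := by

  classical
  have hc₁ := (SimpleGraph.isTree_iff_connected_and_card.1 hT₁).2
  have hc₂ := (SimpleGraph.isTree_iff_connected_and_card.1 hT₂).2
  have ha : a ∈ S₁ ∩ S₂ := by rw [hS]; simp
  have hb : b ∈ S₁ ∩ S₂ := by rw [hS]; simp
  have hr₁ : (G₁.deleteEdges {s(p₁.getVert (p₁.length - 1), b)}).Reachable
      (p₁.getVert (p₁.length - 1)) a := by
    have := su_reach_snd p₁.reverse hp₁.reverse (by simpa using hlen₁)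
    rw [SimpleGraph.Walk.getVert_reverse, Sym2.eq_swap] at this
    exact this
  have hr₂ := su_reach_snd p₂ hp₂ hlen₂
  have he₁ : G₁.Adj (p₁.getVert (p₁.length - 1)) b := by
    have := p₁.adj_getVert_succ (i := p₁.length - 1) (by omega)
    rwa [Nat.sub_add_cancel (by omega), SimpleGraph.Walk.getVert_length] at this
  have he₂ : G₂.Adj a (p₂.getVert 1) := by
    have := p₂.adj_getVert_succ (i := 0) (by omega)
    simpa using this
  generalize p₁.getVert (p₁.length - 1) = h at *
  generalize p₂.getVert 1 = k at *
  set M := (G₁.deleteEdges {s(h, b)} ⊔ G₂.deleteEdges {s(a, k)}) ⊔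
        SimpleGraph.fromEdgeSet {s(h, k)} with hM
  have hle₁ : G₁.deleteEdges {s(h, b)} ≤ M := le_sup_left.trans le_sup_left
  have hle₂ : G₂.deleteEdges {s(a, k)} ≤ M := le_sup_right.trans le_sup_left
  have hhk : M.Reachable h k := by
    by_cases hne : h = k
    · rw [hne]
    · apply SimpleGraph.Adj.reachable
      simp [hM, hne]
  have hr₁M := hr₁.mono hle₁
  have hr₂M := hr₂.mono hle₂
  have hE₁ : ∀ u v, G₁.Adj u v → M.Reachable u v := by
    intro u v huv
    by_cases hd : s(u, v) = s(h, b)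
    · rcases Sym2.eq_iff.1 hd with ⟨rfl, rfl⟩ | ⟨rfl, rfl⟩
      · exact hhk.trans hr₂M
      · exact (hhk.trans hr₂M).symm
    · exact SimpleGraph.Adj.reachable (hle₁ (by rw [SimpleGraph.deleteEdges_adj]; exact ⟨huv, hd⟩))
  have hE₂ : ∀ u v, G₂.Adj u v → M.Reachable u v := by
    intro u v huv
    by_cases hd : s(u, v) = s(a, k)
    · rcases Sym2.eq_iff.1 hd with ⟨rfl, rfl⟩ | ⟨rfl, rfl⟩
      · exact hr₁M.symm.trans hhk
      · exact (hr₁M.symm.trans hhk).symm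
    · exact SimpleGraph.Adj.reachable (hle₂ (by rw [SimpleGraph.deleteEdges_adj]; exact ⟨huv, hd⟩))
  have hMS : ∀ u v, M.Adj u v → u ∈ S₁ ∪ S₂ ∧ v ∈ S₁ ∪ S₂ := by
    intro u v huv
    rcases huv with (huv | huv) | huv
    · have := hG₁S u v huv.1
      exact ⟨Or.inl this.1, Or.inl this.2⟩
    · have := hG₂S u v huv.1
      exact ⟨Or.inr this.1, Or.inr this.2⟩
    · have h1 := (hG₁S _ _ he₁).1
      have h2 := (hG₂S _ _ he₂).2
      have hd : s(u, v) = s(h, k) := huv.1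
      rcases Sym2.eq_iff.1 hd with ⟨rfl, rfl⟩ | ⟨rfl, rfl⟩
      · exact ⟨Or.inl h1, Or.inr h2⟩
      · exact ⟨Or.inr h2, Or.inl h1⟩
  have hra : ∀ u ∈ S₁ ∪ S₂, M.Reachable a u := by
    rintro u (hu | hu)
    · obtain ⟨p⟩ := hT₁.1.preconnected ⟨a, ha.1⟩ ⟨u, hu⟩
      exact su_reach_of_edges hE₁ (p.map (SimpleGraph.Embedding.induce S₁).toHom)
    · obtain ⟨p⟩ := hT₂.1.preconnected ⟨a, ha.2⟩ ⟨u, hu⟩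
      exact su_reach_of_edges hE₂ (p.map (SimpleGraph.Embedding.induce S₂).toHom)
  have hconn : (M.induce (S₁ ∪ S₂)).Connected := by
    haveI : Nonempty ↑(S₁ ∪ S₂) := ⟨⟨a, Or.inl ha.1⟩⟩
    refine ⟨?_⟩
    rintro ⟨u, hu⟩ ⟨v, hv⟩
    obtain ⟨p⟩ := (hra u hu).symm.trans (hra v hv)
    exact su_reach_induce hMS p hu hv
  refine SimpleGraph.isTree_iff_connected_and_card.2 ⟨hconn, ?_⟩
  have hlow := hconn.card_vert_le_card_edgeSet_add_one
  refine le_antisymm ?_ hlow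
  rw [su_card_induce hMS]
  rw [su_card_induce hG₁S] at hc₁
  rw [su_card_induce hG₂S] at hc₂
  rw [Nat.card_coe_set_eq] at *
  have hu := Set.ncard_union_add_ncard_inter S₁ S₂
  rw [hS, Set.ncard_pair hab] at hu
  have hd₁ := Set.ncard_diff_singleton_add_one (s := G₁.edgeSet) (a := s(h, b)) he₁
  have hd₂ := Set.ncard_diff_singleton_add_one (s := G₂.edgeSet) (a := s(a, k)) he₂
  have hsub : M.edgeSet ⊆ ((G₁.edgeSet \ {s(h, b)}) ∪ (G₂.edgeSet \ {s(a, k)})) ∪ {s(h, k)} := by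
    rw [hM, SimpleGraph.edgeSet_sup, SimpleGraph.edgeSet_sup, SimpleGraph.edgeSet_deleteEdges,
      SimpleGraph.edgeSet_deleteEdges, SimpleGraph.edgeSet_fromEdgeSet]
    exact Set.union_subset_union_right _ Set.diff_subset
  have h1 := Set.ncard_le_ncard hsub
  have h2 := Set.ncard_union_le ((G₁.edgeSet \ {s(h, b)}) ∪ (G₂.edgeSet \ {s(a, k)})) {s(h, k)}
  have h3 := Set.ncard_union_le (G₁.edgeSet \ {s(h, b)}) (G₂.edgeSet \ {s(a, k)})
  rw [Set.ncard_singleton] at h2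
  omega
end
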